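/- Let (ν_n)_{n≥1} be Borel probability measures on ℝ with ν_n((−∞,0)) = 0 for every n, satisfying the large deviations principle with rate function ψ, and let R be the attainable set of (ν_n). For each n ≥ 1 define the Borel probability measure μ_n on ℝ by μ_n(B) = ∫_{[0,∞)} Poisson(n·γ)({k ∈ ℕ : k/n ∈ B}) ν_n(dγ) for Borel sets B ⊆ ℝ. Define I : ℝ → [0,∞] by I(a) = inf_{γ∈R} [ℓ(γ;a) + ψ(γ)]. Then (μ_n) satisfies the large deviations principle with rate function I; that is, limsup_{n→∞} (1/n)·log μ_n(F) ≤ −inf_{a∈F} I(a) for every closed set F ⊆ ℝ and liminf_{n→∞} (1/n)·log μ_n(G) ≥ −inf_{a∈G} I(a) for every open set G ⊆ ℝ. -/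

import Mathlib

open MeasureTheory Filter Set
open scoped ENNReal NNReal

/-- A sequence of Borel (probability) measures satisfies the large deviations principle
with rate function `ρ : X → [0,∞]`. -/
def HasLDP {X : Type*} [TopologicalSpace X] [MeasurableSpace X]
    (ν : ℕ → Measure X) (ρ : X → ℝ≥0∞) : Prop :=
  LowerSemicontinuous ρ ∧
  (∀ F : Set X, IsClosed F →
    Filter.limsup (fun n : ℕ => ((n : ℝ)⁻¹ : EReal) * ENNReal.log (ν n F)) Filter.atTop
      ≤ -(⨅ x ∈ F, (ρ x : EReal))) ∧
  (∀ G : Set X, IsOpen G →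
    -(⨅ x ∈ G, (ρ x : EReal)) ≤
      Filter.liminf (fun n : ℕ => ((n : ℝ)⁻¹ : EReal) * ENNReal.log (ν n G)) Filter.atTop)

/-- The attainable set of a sequence of measures on ℝ. -/
def Attainable (ν : ℕ → Measure ℝ) : Set ℝ :=
  {γ : ℝ | ∀ ε > 0, ∃ N : ℕ, ∀ n ≥ N, 0 < ν n (Set.Ioo (γ - ε) (γ + ε))}

/-- The Fenchel-Legendre transform of the Poisson cumulant generating function
with parameter `γ ∈ [0,∞)`, evaluated at `a ∈ ℝ`. -/
noncomputable def ell (γ a : ℝ) : ℝ≥0∞ :=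
  if a < 0 then ⊤
  else if a = 0 then ENNReal.ofReal γ
  else if γ = 0 then ⊤
  else ENNReal.ofReal (γ - a + a * Real.log (a / γ))

/-!
On the exponential scale `e ^ (-n c)`, an LDP is a pair of eventual inequalities. If the laws
`P n x` satisfy an LDP with rate function `ℓ x`, uniformly in `x`, then the mixture of `P n x` over
`ν n` has rate function `y ↦ ⨅ x, ℓ x y + ψ x`. For the upper bound on a closed set `F`, cut the
parameter space into the layers `k δ < ⨅ y ∈ F, ℓ x y ≤ (k + 1) δ`: on such a layer the conditional
probability of `F` is about `e ^ (-n k δ)`, while the layer lies in a closed set whose `ν n`-mass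
is governed by `ψ`, and finitely many layers suffice. The sets are closed because the projections
of the sublevel sets of `ℓ` are proper, which makes up for the missing exponential tightness of `ν`.

Scaled Poisson laws satisfy such a uniform LDP: `ell γ` is the Legendre transform of the
Poisson cumulant generating function, so Chernoff's inequality gives the uniform upper bound, and
Stirling's formula for a single lattice point near `a` gives the locally uniform lower bound.
Restricting the infimum to attainable parameters is harmless, because `ψ = ⊤` off the attainable
set.
-/

open scoped Topology

section ExponentialScale

variable {c d : ℝ} {n : ℕ} {u : ℕ → ℝ≥0∞}

/-- The exponential scale `e^{-nc}`, against which large deviation probabilities are compared. -/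
noncomputable def expDecay (c : ℝ) (n : ℕ) : ℝ≥0∞ :=
  ENNReal.ofReal (Real.exp (-(n * c)))

lemma expDecay_pos (c : ℝ) (n : ℕ) : 0 < expDecay c n :=
  ENNReal.ofReal_pos.2 (Real.exp_pos _)

lemma expDecay_add (c d : ℝ) (n : ℕ) : expDecay (c + d) n = expDecay c n * expDecay d n := by
  rw [expDecay, expDecay, expDecay, ← ENNReal.ofReal_mul (Real.exp_nonneg _), ← Real.exp_add]
  ring_nf

lemma expDecay_antitone (n : ℕ) : Antitone fun c ↦ expDecay c n := fun _ _ hcd ↦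
  ENNReal.ofReal_le_ofReal
    (Real.exp_le_exp.2 (neg_le_neg (mul_le_mul_of_nonneg_left hcd n.cast_nonneg)))

lemma one_le_expDecay (hc : c ≤ 0) (n : ℕ) : 1 ≤ expDecay c n := by
  simpa [expDecay] using mul_nonpos_of_nonneg_of_nonpos n.cast_nonneg hc

lemma eventually_ofReal_mul_natCast_mul_expDecay_le (C : ℝ) (hcd : c < d) :
    ∀ᶠ n : ℕ in atTop, ENNReal.ofReal (C * n) * expDecay d n ≤ expDecay c n := by
  have hlim : Tendsto (fun n : ℕ ↦ C * ((n : ℝ) ^ (1 : ℝ) * Real.exp (-(d - c) * n)))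
      atTop (𝓝 (C * 0)) :=
    ((tendsto_rpow_mul_exp_neg_mul_atTop_nhds_zero 1 (d - c) (sub_pos.2 hcd)).comp
      tendsto_natCast_atTop_atTop).const_mul C
  rw [mul_zero] at hlim
  filter_upwards [hlim.eventually_le_const one_pos] with n hn
  rw [Real.rpow_one] at hn
  rw [expDecay, expDecay, ← ENNReal.ofReal_mul' (Real.exp_nonneg _)]
  apply ENNReal.ofReal_le_ofReal
  calc C * n * Real.exp (-(n * d))
      = C * (n * Real.exp (-(d - c) * n)) * Real.exp (-(n * c)) := by
        rw [mul_assoc, mul_assoc, mul_assoc, ← Real.exp_add]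
        ring_nf
    _ ≤ Real.exp (-(n * c)) := mul_le_of_le_one_left (Real.exp_nonneg _) hn

lemma eventually_expDecay_add_self_le (hcd : c < d) :
    ∀ᶠ n : ℕ in atTop, expDecay d n + expDecay d n ≤ expDecay c n := by
  filter_upwards [eventually_ofReal_mul_natCast_mul_expDecay_le 2 hcd, eventually_ge_atTop 1]
    with n hn hn1
  refine le_trans ?_ hn
  rw [← two_mul]
  gcongr
  rw [← ENNReal.ofReal_ofNat]
  gcongr
  simpa using hn1

lemma inv_mul_log_le_neg_iff {u : ℝ≥0∞} (hn : n ≠ 0) :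
    ((n : ℝ)⁻¹ : EReal) * ENNReal.log u ≤ -(c : EReal) ↔ u ≤ expDecay c n := by
  have hn' : (0 : EReal) < ((n : ℝ) : EReal) := mod_cast Nat.pos_of_ne_zero hn
  rw [← EReal.div_eq_inv_mul, EReal.div_le_iff_le_mul hn' (EReal.coe_ne_top _), expDecay,
    ← ENNReal.log_le_log_iff, ← EReal.exp_coe, EReal.log_exp, EReal.coe_neg, EReal.coe_mul,
    mul_neg]

lemma neg_le_inv_mul_log_iff {u : ℝ≥0∞} (hn : n ≠ 0) :
    -(c : EReal) ≤ ((n : ℝ)⁻¹ : EReal) * ENNReal.log u ↔ expDecay c n ≤ u := by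
  have hn' : (0 : EReal) < ((n : ℝ) : EReal) := mod_cast Nat.pos_of_ne_zero hn
  rw [← EReal.div_eq_inv_mul, EReal.le_div_iff_mul_le hn' (EReal.coe_ne_top _), expDecay,
    ← ENNReal.log_le_log_iff, ← EReal.exp_coe, EReal.log_exp, EReal.coe_neg, EReal.coe_mul,
    mul_comm, mul_neg]

lemma limsup_inv_mul_log_le_neg_iff {J : EReal} :
    limsup (fun n : ℕ ↦ ((n : ℝ)⁻¹ : EReal) * ENNReal.log (u n)) atTop ≤ -J ↔
      ∀ c : ℝ, c < J → ∀ᶠ n in atTop, u n ≤ expDecay c n := by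
  constructor
  · intro h c hc
    filter_upwards [eventually_lt_of_limsup_lt (h.trans_lt (EReal.neg_lt_neg_iff.2 hc)),
      eventually_ne_atTop 0] with n hlt hn
    exact (inv_mul_log_le_neg_iff hn).1 hlt.le
  · intro h
    refine EReal.le_neg.2 (EReal.ge_of_forall_gt_iff_ge.1 fun c hc ↦ EReal.le_neg.2 ?_)
    refine limsup_le_of_le (by isBoundedDefault) ?_
    filter_upwards [h c hc, eventually_ne_atTop 0] with n hle hn
    exact (inv_mul_log_le_neg_iff hn).2 hle

lemma neg_le_liminf_inv_mul_log_iff {J : EReal} :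
    -J ≤ liminf (fun n : ℕ ↦ ((n : ℝ)⁻¹ : EReal) * ENNReal.log (u n)) atTop ↔
      ∀ c : ℝ, J < c → ∀ᶠ n in atTop, expDecay c n ≤ u n := by
  constructor
  · intro h c hc
    filter_upwards [eventually_lt_of_lt_liminf ((EReal.neg_lt_neg_iff.2 hc).trans_le h),
      eventually_ne_atTop 0] with n hlt hn
    exact (neg_le_inv_mul_log_iff hn).1 hlt.le
  · intro h
    refine EReal.neg_le.2 (EReal.le_of_forall_lt_iff_le.1 fun c hc ↦ EReal.neg_le.2 ?_)
    refine le_liminf_of_le (by isBoundedDefault) ?_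
    filter_upwards [h c hc, eventually_ne_atTop 0] with n hle hn
    exact (neg_le_inv_mul_log_iff hn).2 hle

end ExponentialScale

section LDP

variable {X Y : Type*}

lemma ofReal_le_iff_coe_le_coe {c : ℝ} {r : ℝ≥0∞} :
    ENNReal.ofReal c ≤ r ↔ (c : EReal) ≤ r := by
  rw [← EReal.coe_ennreal_le_coe_ennreal_iff, EReal.coe_ennreal_ofReal,
    EReal.coe_strictMono.monotone.map_max, max_le_iff, EReal.coe_zero,
    and_iff_left (EReal.coe_ennreal_nonneg r)]

lemma coe_lt_iInf_coe_iff {ρ : X → ℝ≥0∞} {F : Set X} {c : ℝ} :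
    (c : EReal) < ⨅ x ∈ F, (ρ x : EReal) ↔ ∃ d > c, ∀ x ∈ F, ENNReal.ofReal d ≤ ρ x := by
  simp only [ofReal_le_iff_coe_le_coe, ← le_iInf₂_iff]
  constructor
  · intro h
    obtain ⟨d, hcd, hd⟩ := EReal.exists_between_coe_real h
    exact ⟨d, EReal.coe_lt_coe_iff.1 hcd, hd.le⟩
  · rintro ⟨d, hcd, hd⟩
    exact (EReal.coe_lt_coe_iff.2 hcd).trans_le hd

lemma iInf_coe_lt_coe_iff {ρ : X → ℝ≥0∞} {G : Set X} {c : ℝ} :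
    ⨅ x ∈ G, (ρ x : EReal) < (c : EReal) ↔ ∃ x ∈ G, ρ x < ENNReal.ofReal c := by
  simp only [iInf_lt_iff, exists_prop]
  simp only [← not_le, ofReal_le_iff_coe_le_coe]

variable [TopologicalSpace X] [MeasurableSpace X] [TopologicalSpace Y] [MeasurableSpace Y]

theorem hasLDP_iff_eventually {ν : ℕ → Measure X} {ρ : X → ℝ≥0∞} :
    HasLDP ν ρ ↔ LowerSemicontinuous ρ ∧
      (∀ F, IsClosed F → ∀ c d : ℝ, c < d → (∀ x ∈ F, ENNReal.ofReal d ≤ ρ x) →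
        ∀ᶠ n in atTop, ν n F ≤ expDecay c n) ∧
      (∀ G, IsOpen G → ∀ x ∈ G, ∀ c : ℝ, ρ x < ENNReal.ofReal c →
        ∀ᶠ n in atTop, expDecay c n ≤ ν n G) := by
  simp only [HasLDP, limsup_inv_mul_log_le_neg_iff, neg_le_liminf_inv_mul_log_iff,
    coe_lt_iInf_coe_iff, iInf_coe_lt_coe_iff]
  exact and_congr_right fun _ ↦ and_congr
    ⟨fun h F hF c d hcd hd ↦ h F hF c ⟨d, hcd, hd⟩, fun h F hF c ⟨d, hcd, hd⟩ ↦ h F hF c d hcd hd⟩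
    ⟨fun h G hG x hx c hc ↦ h G hG c ⟨x, hx, hc⟩, fun h G hG c ⟨x, hx, hc⟩ ↦ h G hG x hx c hc⟩

namespace HasLDP

variable {ν : ℕ → Measure X} {ρ : X → ℝ≥0∞}

lemma eventually_measure_le (h : HasLDP ν ρ) {F : Set X} (hF : IsClosed F) {c d : ℝ}
    (hcd : c < d) (hd : ∀ x ∈ F, ENNReal.ofReal d ≤ ρ x) :
    ∀ᶠ n in atTop, ν n F ≤ expDecay c n :=
  (hasLDP_iff_eventually.1 h).2.1 F hF c d hcd hd

lemma eventually_le_measure (h : HasLDP ν ρ) {G : Set X} (hG : IsOpen G) {x : X} (hx : x ∈ G)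
    {c : ℝ} (hc : ρ x < ENNReal.ofReal c) :
    ∀ᶠ n in atTop, expDecay c n ≤ ν n G :=
  (hasLDP_iff_eventually.1 h).2.2 G hG x hx c hc

lemma eventually_measure_pos (h : HasLDP ν ρ) {G : Set X} (hG : IsOpen G) {x : X} (hx : x ∈ G)
    (hρ : ρ x ≠ ⊤) : ∀ᶠ n in atTop, 0 < ν n G := by
  obtain ⟨c, hc⟩ := ENNReal.lt_iff_exists_nnreal_btwn.1 hρ.lt_top
  filter_upwards [h.eventually_le_measure hG hx (c := c) (by simpa using hc.1)] with n hn
  exact (expDecay_pos c n).trans_le hn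

theorem comap_isClosedEmbedding [BorelSpace X] [BorelSpace Y] {f : Y → X}
    (hf : Topology.IsClosedEmbedding f) (h : HasLDP ν ρ) (hν : ∀ n, ν n (range f)ᶜ = 0) :
    HasLDP (fun n ↦ (ν n).comap f) (ρ ∘ f) := by
  refine hasLDP_iff_eventually.2
    ⟨h.1.comp hf.continuous, fun F hF c d hcd hd ↦ ?_, fun G hG y hy c hc ↦ ?_⟩
  · simp only [hf.measurableEmbedding.comap_apply]
    exact h.eventually_measure_le (hf.isClosedMap F hF) hcd (forall_mem_image.2 hd)
  · obtain ⟨V, hV, rfl⟩ := hf.isInducing.isOpen_iff.1 hG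
    filter_upwards [h.eventually_le_measure hV hy hc] with n hn
    rwa [hf.measurableEmbedding.comap_apply, image_preimage_eq_inter_range,
      measure_inter_conull (hν n)]

end HasLDP

end LDP

section Mixture

lemma exists_lt_ofReal_add_eq {u v : ℝ≥0∞} {c : ℝ} (h : u + v < ENNReal.ofReal c) :
    ∃ c₁ c₂ : ℝ, u < ENNReal.ofReal c₁ ∧ v < ENNReal.ofReal c₂ ∧ c₁ + c₂ = c := by
  obtain ⟨hu, hv⟩ := ENNReal.add_ne_top.1 h.ne_top
  lift u to ℝ≥0 using hu
  lift v to ℝ≥0 using hv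
  rw [← ENNReal.coe_add, ENNReal.coe_lt_ofReal] at h
  push_cast at h
  refine ⟨(c + u - v) / 2, (c + v - u) / 2, ?_, ?_, by ring⟩ <;>
  · rw [ENNReal.coe_lt_ofReal]
    linarith

variable {X Y : Type*} {ℓ : X → Y → ℝ≥0∞} {F : Set Y} {s : ℝ}

/-- The parameters `x` for which the rate function `ℓ x` takes a value at most `s` on `F`. -/
def rateSublevel (ℓ : X → Y → ℝ≥0∞) (F : Set Y) (s : ℝ) : Set X :=
  {x | ∃ y ∈ F, ℓ x y ≤ ENNReal.ofReal s}

lemma ofReal_le_of_notMem_rateSublevel {x : X} (hx : x ∉ rateSublevel ℓ F s) :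
    ∀ y ∈ F, ENNReal.ofReal s ≤ ℓ x y :=
  fun y hy ↦ le_of_not_ge fun h ↦ hx ⟨y, hy, h⟩

variable [TopologicalSpace X] [TopologicalSpace Y]

lemma isClosedMap_domRestrict_of_isCompact_inter [T2Space Y] [WeaklyLocallyCompactSpace Y]
    {f : X → Y} (hf : Continuous f) {L : Set X} (hL : ∀ K, IsCompact K → IsCompact (L ∩ f ⁻¹' K)) :
    IsClosedMap (L.domRestrict f) := by
  refine (isProperMap_iff_isCompact_preimage.2
    ⟨hf.comp continuous_subtype_val, fun K hK ↦ ?_⟩).isClosedMap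
  rw [Subtype.isCompact_iff]
  convert hL K hK using 1
  exact Subtype.image_preimage_coe L (f ⁻¹' K)

variable [MeasurableSpace Y]

/-- A large deviations principle for the measures `P n x`, with rate function `ℓ x`, whose upper
bound is uniform in the parameter `x` and whose lower bound is locally uniform in `x`. The two
`isClosedMap` fields replace compactness of the parameter space: they hold as soon as the
projections of the sublevel sets of `ℓ` are proper. -/
structure IsUniformLDP (P : ℕ → X → Measure Y) (ℓ : X → Y → ℝ≥0∞) : Prop where
  lowerSemicontinuous : LowerSemicontinuous (Function.uncurry ℓ)
  isClosedMap_fst : ∀ t < ⊤, IsClosedMap ({p | Function.uncurry ℓ p ≤ t}.domRestrict Prod.fst)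
  isClosedMap_snd : ∀ t < ⊤, IsClosedMap ({p | Function.uncurry ℓ p ≤ t}.domRestrict Prod.snd)
  upper : ∀ F, IsClosed F → ∀ s t : ℝ, s < t → ∀ᶠ n in atTop, ∀ x,
    (∀ y ∈ F, ENNReal.ofReal t ≤ ℓ x y) → P n x F ≤ expDecay s n
  lower : ∀ G, IsOpen G → ∀ x, ∀ y ∈ G, ∀ c : ℝ, ℓ x y < ENNReal.ofReal c →
    ∀ᶠ p : ℕ × X in atTop ×ˢ 𝓝 x, expDecay c p.1 ≤ P p.1 p.2 G

variable {P : ℕ → X → Measure Y} {ψ : X → ℝ≥0∞}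

namespace IsUniformLDP

lemma isClosed_rateSublevel (hP : IsUniformLDP P ℓ) (hF : IsClosed F) (s : ℝ) :
    IsClosed (rateSublevel ℓ F s) := by
  have h := hP.isClosedMap_fst (ENNReal.ofReal s) ENNReal.ofReal_lt_top _
    ((hF.preimage continuous_snd).preimage continuous_subtype_val)
  rw [image_domRestrict] at h
  convert h using 1
  ext x
  simp [rateSublevel]

theorem lowerSemicontinuous_iInf_add (hP : IsUniformLDP P ℓ) (hψ : LowerSemicontinuous ψ) :
    LowerSemicontinuous fun y ↦ ⨅ x, ℓ x y + ψ x := by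
  refine lowerSemicontinuous_iff_isClosed_preimage.2 fun t ↦ ?_
  have hsub : (fun y ↦ ⨅ x, ℓ x y + ψ x) ⁻¹' Iic t =
      ⋂ s ∈ Ioo t ⊤, {p | Function.uncurry ℓ p ≤ s}.domRestrict Prod.snd ''
        {p | Function.uncurry ℓ p.1 + ψ p.1.1 ≤ s} := by
    ext y
    simp only [mem_preimage, mem_Iic, mem_iInter₂]
    constructor
    · intro hy s hs
      obtain ⟨x, hx⟩ := iInf_lt_iff.1 (hy.trans_lt hs.1)
      exact ⟨⟨(x, y), le_self_add.trans hx.le⟩, hx.le, rfl⟩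
    · refine fun hy ↦ le_of_forall_gt_imp_ge_of_dense fun s hs ↦ ?_
      obtain rfl | hs' := eq_or_ne s ⊤
      · exact le_top
      · obtain ⟨p, hp, rfl⟩ := hy s ⟨hs, hs'.lt_top⟩
        exact (iInf_le _ p.1.1).trans hp
  rw [hsub]
  refine isClosed_biInter fun s hs ↦ hP.isClosedMap_snd s hs.2 _ ?_
  exact ((hP.lowerSemicontinuous.add (hψ.comp continuous_fst)).isClosed_preimage s).preimage
    continuous_subtype_val

section

variable [MeasurableSpace X] {ν : ℕ → Measure X} {δ c d j : ℝ}
  (hP : IsUniformLDP P ℓ) (hν : HasLDP ν ψ)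

include hP hν

lemma eventually_measure_rateSublevel_le (hF : IsClosed F)
    (hj : ∀ x, ∀ y ∈ F, ENNReal.ofReal j ≤ ℓ x y + ψ x) (hs : 0 ≤ s) (hsd : s + d < j) :
    ∀ᶠ n in atTop, ν n (rateSublevel ℓ F s) ≤ expDecay d n := by
  refine hν.eventually_measure_le (hP.isClosed_rateSublevel hF s) (lt_sub_iff_add_lt'.2 hsd) ?_
  rintro x ⟨y, hy, hxy⟩
  rw [ENNReal.ofReal_sub _ hs, tsub_le_iff_left]
  exact (hj x y hy).trans (by gcongr)

variable [OpensMeasurableSpace X]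

lemma eventually_setLIntegral_layer_le (hF : IsClosed F)
    (hj : ∀ x, ∀ y ∈ F, ENNReal.ofReal j ≤ ℓ x y + ψ x) {s s' : ℝ} (hs' : 0 ≤ s')
    (hd : d + (s' - s) < j) :
    ∀ᶠ n in atTop,
      ∫⁻ x in rateSublevel ℓ F s' \ rateSublevel ℓ F s, P n x F ∂ν n ≤ expDecay d n := by
  obtain ⟨r, hr, hrs⟩ := exists_between (show d + s' - j < s by linarith)
  filter_upwards [hP.upper F hF r s hrs,
    hP.eventually_measure_rateSublevel_le hν hF hj hs' (show s' + (d - r) < j by linarith)]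
    with n hupper hlayer
  calc ∫⁻ x in rateSublevel ℓ F s' \ rateSublevel ℓ F s, P n x F ∂ν n
      ≤ ∫⁻ _ in rateSublevel ℓ F s' \ rateSublevel ℓ F s, expDecay r n ∂ν n :=
        setLIntegral_mono' ((hP.isClosed_rateSublevel hF _).measurableSet.diff
          (hP.isClosed_rateSublevel hF _).measurableSet)
          fun _ hx ↦ hupper _ (ofReal_le_of_notMem_rateSublevel hx.2)
    _ ≤ expDecay r n * expDecay (d - r) n := by
        rw [setLIntegral_const]
        gcongr
        exact (measure_mono sdiff_subset).trans hlayer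
    _ = expDecay d n := by rw [← expDecay_add, add_sub_cancel]

lemma eventually_setLIntegral_rateSublevel_le [∀ n x, IsProbabilityMeasure (P n x)]
    (hF : IsClosed F) (hj : ∀ x, ∀ y ∈ F, ENNReal.ofReal j ≤ ℓ x y + ψ x) (hδ : 0 ≤ δ) (k : ℕ) :
    ∀ d, d + δ < j →
      ∀ᶠ n in atTop, ∫⁻ x in rateSublevel ℓ F (k * δ), P n x F ∂ν n ≤ expDecay d n := by
  induction k with
  | zero =>
    intro d hd
    filter_upwards [hP.eventually_measure_rateSublevel_le hν hF hj le_rfl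
      (show 0 + d < j by linarith)] with n hn
    calc ∫⁻ x in rateSublevel ℓ F ((0 : ℕ) * δ), P n x F ∂ν n
        ≤ ∫⁻ _ in rateSublevel ℓ F 0, 1 ∂ν n := by
          rw [Nat.cast_zero, zero_mul]
          exact lintegral_mono fun _ ↦ prob_le_one
      _ ≤ expDecay d n := by rwa [setLIntegral_one]
  | succ k ih =>
    intro d hd
    obtain ⟨d', hdd', hd'⟩ := exists_between (lt_sub_iff_add_lt.2 hd)
    rw [lt_sub_iff_add_lt] at hd'
    filter_upwards [ih d' hd', hP.eventually_setLIntegral_layer_le hν hF hj (by positivity)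
        (show d' + ((k + 1 : ℕ) * δ - k * δ) < j by push_cast; linarith),
      eventually_expDecay_add_self_le hdd'] with n hinner hlayer hsum
    set C := rateSublevel ℓ F (k * δ)
    set C' := rateSublevel ℓ F ((k + 1 : ℕ) * δ)
    calc ∫⁻ x in C', P n x F ∂ν n
        ≤ ∫⁻ x in C ∪ C' \ C, P n x F ∂ν n :=
          lintegral_mono_set (by rw [union_sdiff_self]; exact subset_union_right)
      _ ≤ ∫⁻ x in C, P n x F ∂ν n + ∫⁻ x in C' \ C, P n x F ∂ν n := lintegral_union_le _ _ _
      _ ≤ expDecay d n := (add_le_add hinner hlayer).trans hsum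

lemma eventually_lintegral_le [∀ n, IsProbabilityMeasure (ν n)]
    [∀ n x, IsProbabilityMeasure (P n x)] (hF : IsClosed F)
    (hj : ∀ x, ∀ y ∈ F, ENNReal.ofReal j ≤ ℓ x y + ψ x) (hcj : c < j) :
    ∀ᶠ n in atTop, ∫⁻ x, P n x F ∂ν n ≤ expDecay c n := by
  set δ := (j - c) / 3 with hδ
  have hδ0 : 0 < δ := by linarith
  obtain ⟨K, hK⟩ := exists_nat_gt ((c + δ) / δ)
  rw [div_lt_iff₀ hδ0] at hK
  filter_upwards [
    hP.eventually_setLIntegral_rateSublevel_le hν hF hj hδ0.le K (c + δ) (by linarith),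
    hP.upper F hF (c + δ) (K * δ) hK,
    eventually_expDecay_add_self_le (show c < c + δ by linarith)] with n hinner hupper hsum
  set C := rateSublevel ℓ F (K * δ)
  have hC : MeasurableSet C := (hP.isClosed_rateSublevel hF _).measurableSet
  have houter : ∫⁻ x in Cᶜ, P n x F ∂ν n ≤ expDecay (c + δ) n :=
    calc ∫⁻ x in Cᶜ, P n x F ∂ν n
        ≤ ∫⁻ _ in Cᶜ, expDecay (c + δ) n ∂ν n :=
          setLIntegral_mono' hC.compl fun _ hx ↦ hupper _ (ofReal_le_of_notMem_rateSublevel hx)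
      _ ≤ expDecay (c + δ) n := by
          rw [setLIntegral_const]
          exact mul_le_of_le_one_right' prob_le_one
  rw [← lintegral_add_compl _ hC]
  exact (add_le_add hinner houter).trans hsum

lemma eventually_le_lintegral {G : Set Y} (hG : IsOpen G) {x : X} {y : Y} (hy : y ∈ G)
    (hc : ℓ x y + ψ x < ENNReal.ofReal c) :
    ∀ᶠ n in atTop, expDecay c n ≤ ∫⁻ x, P n x G ∂ν n := by
  obtain ⟨c₁, c₂, hc₁, hc₂, rfl⟩ := exists_lt_ofReal_add_eq hc
  obtain ⟨pn, hpn, px, hpx, hlower⟩ := eventually_prod_iff.1 (hP.lower G hG x y hy c₁ hc₁)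
  obtain ⟨U, hU, hUo, hxU⟩ := eventually_nhds_iff.1 hpx
  filter_upwards [hpn, hν.eventually_le_measure hUo hxU hc₂] with n hn hνU
  calc expDecay (c₁ + c₂) n
      = expDecay c₁ n * expDecay c₂ n := expDecay_add c₁ c₂ n
    _ ≤ expDecay c₁ n * ν n U := by gcongr
    _ = ∫⁻ _ in U, expDecay c₁ n ∂ν n := (setLIntegral_const _ _).symm
    _ ≤ ∫⁻ x in U, P n x G ∂ν n :=
        setLIntegral_mono' hUo.measurableSet fun x hx ↦ hlower hn (hU x hx)
    _ ≤ ∫⁻ x, P n x G ∂ν n := setLIntegral_le_lintegral _ _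

theorem hasLDP_mixture [OpensMeasurableSpace Y] [∀ n, IsProbabilityMeasure (ν n)]
    [∀ n x, IsProbabilityMeasure (P n x)] {μ : ℕ → Measure Y}
    (hμ : ∀ᶠ n in atTop, ∀ B, MeasurableSet B → μ n B = ∫⁻ x, P n x B ∂ν n) :
    HasLDP μ fun y ↦ ⨅ x, ℓ x y + ψ x := by
  refine hasLDP_iff_eventually.2
    ⟨hP.lowerSemicontinuous_iInf_add hν.1, fun F hF c j hcj hj ↦ ?_, fun G hG y hy c hc ↦ ?_⟩
  · filter_upwards [hμ, hP.eventually_lintegral_le hν hF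
      (fun x y hy ↦ (hj y hy).trans (iInf_le _ x)) hcj] with n hn hle
    exact (hn F hF.measurableSet).trans_le hle
  · obtain ⟨x, hx⟩ := iInf_lt_iff.1 hc
    filter_upwards [hμ, hP.eventually_le_lintegral hν hG hy hx] with n hn hle
    exact hle.trans_eq (hn G hG.measurableSet).symm

end

end IsUniformLDP

end Mixture

section PoissonRate

variable {γ : ℝ≥0} {a : ℝ} {t : ℝ≥0∞}

lemma ell_of_neg (γ : ℝ) (ha : a < 0) : ell γ a = ⊤ := if_pos ha

lemma ell_zero_right (γ : ℝ) : ell γ 0 = ENNReal.ofReal γ := by simp [ell]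

lemma ell_zero_left (ha : 0 < a) : ell 0 a = ⊤ := by simp [ell, ha.not_gt, ha.ne']

lemma ell_of_pos {γ : ℝ} (hγ : 0 < γ) (ha : 0 < a) :
    ell γ a = ENNReal.ofReal (γ - a + a * Real.log (a / γ)) := by
  simp [ell, ha.not_gt, ha.ne', hγ.ne']

lemma ofReal_mul_sub_le_ell (γ : ℝ≥0) (a s : ℝ) :
    ENNReal.ofReal (s * a - γ * (Real.exp s - 1)) ≤ ell γ a := by
  obtain ha | rfl | ha := lt_trichotomy a 0
  · exact le_top.trans_eq (ell_of_neg γ ha).symm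
  · rw [ell_zero_right]
    gcongr
    nlinarith [γ.coe_nonneg, Real.exp_pos s]
  obtain rfl | hγ := eq_zero_or_pos γ
  · exact le_top.trans_eq (ell_zero_left ha).symm
  have hγ' : (0 : ℝ) < γ := hγ
  rw [ell_of_pos hγ' ha]
  gcongr
  have hexp : a * Real.exp (s - Real.log (a / γ)) = γ * Real.exp s := by
    rw [Real.exp_sub, Real.exp_log (by positivity)]
    field_simp
  nlinarith [Real.add_one_le_exp (s - Real.log (a / γ))]

lemma iSup_ofReal_eq_top {ι : Sort*} {f : ι → ℝ} (hf : ∀ r : ℝ, 0 ≤ r → ∃ s, r ≤ f s) :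
    ⨆ s, ENNReal.ofReal (f s) = ⊤ := by
  refine ENNReal.eq_top_of_forall_nnreal_le fun r ↦ ?_
  obtain ⟨s, hs⟩ := hf r r.coe_nonneg
  exact le_iSup_of_le s (by simpa using ENNReal.ofReal_le_ofReal hs)

theorem ell_eq_iSup (γ : ℝ≥0) (a : ℝ) :
    ell γ a = ⨆ s : ℝ, ENNReal.ofReal (s * a - γ * (Real.exp s - 1)) := by
  refine le_antisymm ?_ (iSup_le (ofReal_mul_sub_le_ell γ a))
  obtain ha | rfl | ha := lt_trichotomy a 0
  · rw [iSup_ofReal_eq_top fun r hr ↦ ⟨r / a, ?_⟩]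
    · exact le_top
    · rw [div_mul_cancel₀ r ha.ne]
      nlinarith [γ.coe_nonneg, Real.exp_le_one_iff.2 (div_nonpos_of_nonneg_of_nonpos hr ha.le)]
  · have hlim : Tendsto (fun s ↦ ENNReal.ofReal (s * 0 - γ * (Real.exp s - 1))) atBot
        (𝓝 (ENNReal.ofReal γ)) := by
      refine (ENNReal.continuous_ofReal.tendsto _).comp ?_
      simpa using ((Real.tendsto_exp_atBot.sub_const 1).const_mul (γ : ℝ)).const_sub 0
    rw [ell_zero_right]
    exact le_of_tendsto' hlim fun s ↦ le_iSup_of_le s le_rfl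
  obtain rfl | hγ := eq_zero_or_pos γ
  · rw [iSup_ofReal_eq_top fun r _ ↦ ⟨r / a, ?_⟩]
    · exact le_top
    · simp [ha.ne']
  · have hγ' : (0 : ℝ) < γ := hγ
    refine le_iSup_of_le (Real.log (a / γ)) ?_
    rw [ell_of_pos hγ' ha, Real.exp_log (by positivity)]
    apply ENNReal.ofReal_le_ofReal
    field_simp
    linarith

lemma lowerSemicontinuous_uncurry_ell :
    LowerSemicontinuous (Function.uncurry fun (γ : ℝ≥0) (a : ℝ) ↦ ell γ a) := by
  have hsup : (Function.uncurry fun (γ : ℝ≥0) (a : ℝ) ↦ ell γ a) = fun p : ℝ≥0 × ℝ ↦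
      ⨆ s : ℝ, ENNReal.ofReal (s * p.2 - p.1 * (Real.exp s - 1)) :=
    funext fun p ↦ ell_eq_iSup p.1 p.2
  rw [hsup]
  refine lowerSemicontinuous_iSup fun s ↦ Continuous.lowerSemicontinuous ?_
  exact ENNReal.continuous_ofReal.comp (by fun_prop)

lemma nonneg_of_ell_ne_top {γ : ℝ} (h : ell γ a ≠ ⊤) : 0 ≤ a :=
  not_lt.1 fun ha ↦ h (ell_of_neg γ ha)

lemma mul_sub_le_toReal_of_ell_le (h : ell γ a ≤ t) (ht : t < ⊤) (s : ℝ) :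
    s * a - γ * (Real.exp s - 1) ≤ t.toReal :=
  (ENNReal.ofReal_le_iff_le_toReal ht.ne).1 ((ofReal_mul_sub_le_ell γ a s).trans h)

lemma isClosed_sublevel_ell (t : ℝ≥0∞) :
    IsClosed {p | (Function.uncurry fun (γ : ℝ≥0) (a : ℝ) ↦ ell γ a) p ≤ t} :=
  lowerSemicontinuous_uncurry_ell.isClosed_preimage t

lemma isClosedMap_fst_sublevel_ell (ht : t < ⊤) : IsClosedMap
    ({p | (Function.uncurry fun (γ : ℝ≥0) (a : ℝ) ↦ ell γ a) p ≤ t}.domRestrict Prod.fst) := by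
  refine isClosedMap_domRestrict_of_isCompact_inter continuous_fst fun K hK ↦ ?_
  obtain ⟨M, hM⟩ := hK.bddAbove
  refine IsCompact.of_isClosed_subset (hK.prod (isCompact_Icc
    (a := (0 : ℝ)) (b := t.toReal + M * (Real.exp 1 - 1))))
    ((isClosed_sublevel_ell t).inter (hK.isClosed.preimage continuous_fst)) ?_
  rintro ⟨γ, a⟩ ⟨hγa, hγ⟩
  refine ⟨hγ, nonneg_of_ell_ne_top (hγa.trans_lt ht).ne, ?_⟩
  have hγM : (γ : ℝ) ≤ M := hM hγ
  nlinarith [mul_sub_le_toReal_of_ell_le hγa ht 1, Real.add_one_le_exp 1]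

lemma isClosedMap_snd_sublevel_ell (ht : t < ⊤) : IsClosedMap
    ({p | (Function.uncurry fun (γ : ℝ≥0) (a : ℝ) ↦ ell γ a) p ≤ t}.domRestrict Prod.snd) := by
  refine isClosedMap_domRestrict_of_isCompact_inter continuous_snd fun K hK ↦ ?_
  obtain ⟨M, hM⟩ := hK.bddAbove
  refine IsCompact.of_isClosed_subset ((isCompact_Icc
    (a := (0 : ℝ≥0)) (b := Real.toNNReal ((t.toReal + M) / (1 - Real.exp (-1))))).prod hK)
    ((isClosed_sublevel_ell t).inter (hK.isClosed.preimage continuous_snd)) ?_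
  rintro ⟨γ, a⟩ ⟨hγa, ha⟩
  refine ⟨⟨zero_le, NNReal.le_toNNReal_of_coe_le ?_⟩, ha⟩
  have haM : a ≤ M := hM ha
  rw [le_div_iff₀ (sub_pos.2 (Real.exp_lt_one_iff.2 neg_one_lt_zero))]
  linarith [mul_sub_le_toReal_of_ell_le hγa ht (-1)]

end PoissonRate

section Poisson

open ProbabilityTheory Real
open scoped Nat

variable {n k : ℕ} {γ : ℝ≥0} {r : ℝ≥0} {s t a c : ℝ} {F G : Set ℝ}

lemma hasSum_poisson_exp_mul (r : ℝ≥0) (s : ℝ) :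
    HasSum (fun k : ℕ ↦ exp (-r) * r ^ k / k ! * exp (s * k)) (exp (r * (exp s - 1))) := by
  convert! (NormedSpace.expSeries_div_hasSum_exp (r * exp s)).mul_left (exp (-r)) using 1
  · ext k
    rw [mul_pow, ← exp_nat_mul, mul_comm s]
    ring
  · rw [← exp_eq_exp_ℝ, ← exp_add]
    ring_nf

lemma integrable_exp_mul_poissonMeasure (r : ℝ≥0) (s : ℝ) :
    Integrable (fun k : ℕ ↦ exp (s * k)) (poissonMeasure r) := by
  simpa only [integrable_poissonMeasure_iff, norm_of_nonneg (exp_nonneg _)] using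
    (hasSum_poisson_exp_mul r s).summable

lemma mgf_poissonMeasure (r : ℝ≥0) (s : ℝ) :
    mgf (fun k : ℕ ↦ (k : ℝ)) (poissonMeasure r) s = exp (r * (exp s - 1)) := by
  rw [mgf, integral_poissonMeasure]
  exact (hasSum_poisson_exp_mul r s).tsum_eq

lemma poissonMeasure_mul_le_le (r : ℝ≥0) (s x : ℝ) :
    poissonMeasure r {k : ℕ | s * x ≤ s * k} ≤
      ENNReal.ofReal (exp (-(s * x - r * (exp s - 1)))) := by
  have hchernoff := measure_ge_le_exp_mul_mgf (μ := poissonMeasure r) (X := fun k : ℕ ↦ s * k)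
    (s * x) zero_le_one (by simpa using integrable_exp_mul_poissonMeasure r s)
  rw [mgf_const_mul, mul_one, mgf_poissonMeasure, ← exp_add] at hchernoff
  rw [← ofReal_measureReal]
  exact ENNReal.ofReal_le_ofReal (hchernoff.trans_eq (by ring_nf))

lemma poissonMeasure_le_expDecay (hn : n ≠ 0) (ht : 0 ≤ t)
    (hk : ENNReal.ofReal t < ell γ (k / n)) {S : Set ℕ}
    (hS : ∀ i ∈ S, 0 ≤ ((i : ℝ) - k) * (k - n * γ)) :
    poissonMeasure (n * γ) S ≤ expDecay t n := by
  have hn' : (0 : ℝ) < n := by positivity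
  rw [ell_eq_iSup, lt_iSup_iff] at hk
  obtain ⟨s, hs⟩ := hk
  have hts : n * t < s * k - n * γ * (exp s - 1) := by
    have h := mul_lt_mul_of_pos_left (ENNReal.ofReal_lt_ofReal_iff'.1 hs).1 hn'
    field_simp at h ⊢
    linarith
  -- `s` points from the mean `nγ` towards `k`, because `e ^ s - 1 ≥ s`.
  have hdir : 0 < s * (k - n * γ) := by
    nlinarith [mul_nonneg hn'.le ht, mul_nonneg (mul_nonneg hn'.le γ.coe_nonneg)
      (sub_nonneg.2 (add_one_le_exp s))]
  have hsub : S ⊆ {i : ℕ | s * k ≤ s * i} := fun i hi ↦ by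
    by_contra hlt
    nlinarith [mul_nonneg (sq_nonneg s) (hS i hi), mul_pos hdir (sub_pos.2 (not_le.1 hlt))]
  calc poissonMeasure (n * γ) S
      ≤ poissonMeasure (n * γ) {i : ℕ | s * k ≤ s * i} := measure_mono hsub
    _ ≤ ENNReal.ofReal (exp (-(s * k - (n * γ : ℝ≥0) * (exp s - 1)))) :=
        poissonMeasure_mul_le_le _ s k
    _ ≤ expDecay t n := by
        rw [expDecay]
        gcongr
        exact_mod_cast hts.le

/-- The law of `N / n` for a Poisson variable `N` with mean `n * γ`. -/
noncomputable def scaledPoisson (n : ℕ) (γ : ℝ≥0) : Measure ℝ :=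
  (poissonMeasure (n * γ)).map fun k : ℕ ↦ (k : ℝ) / n

lemma scaledPoisson_apply (n : ℕ) (γ : ℝ≥0) {B : Set ℝ} (hB : MeasurableSet B) :
    scaledPoisson n γ B = poissonMeasure (n * γ) {k : ℕ | (k : ℝ) / n ∈ B} :=
  Measure.map_apply .of_discrete hB

instance (n : ℕ) (γ : ℝ≥0) : IsProbabilityMeasure (scaledPoisson n γ) :=
  Measure.isProbabilityMeasure_map (Measurable.of_discrete).aemeasurable

lemma scaledPoisson_le_add_expDecay (hn : n ≠ 0) (hs : 0 ≤ s) (hst : s < t) (hF : IsClosed F)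
    (hFt : ∀ y ∈ F, ENNReal.ofReal t ≤ ell γ y) :
    scaledPoisson n γ F ≤ expDecay s n + expDecay s n := by
  set S := {k : ℕ | (k : ℝ) / n ∈ F}
  have hell : ∀ k ∈ S, ENNReal.ofReal s < ell γ (k / n) := fun k hk ↦
    ((ENNReal.ofReal_lt_ofReal_iff (hs.trans_lt hst)).2 hst).trans_le (hFt _ hk)
  have hright : poissonMeasure (n * γ) {k ∈ S | (n * γ : ℝ) ≤ k} ≤ expDecay s n := by
    obtain hempty | hne := {k ∈ S | (n * γ : ℝ) ≤ k}.eq_empty_or_nonempty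
    · simp [hempty]
    have hmin := Nat.sInf_mem hne
    refine poissonMeasure_le_expDecay hn hs (hell _ hmin.1) fun i hi ↦ ?_
    exact mul_nonneg (sub_nonneg.2 (mod_cast Nat.sInf_le hi)) (sub_nonneg.2 hmin.2)
  have hleft : poissonMeasure (n * γ) {k ∈ S | (k : ℝ) ≤ n * γ} ≤ expDecay s n := by
    obtain hempty | hne := {k ∈ S | (k : ℝ) ≤ n * γ}.eq_empty_or_nonempty
    · simp [hempty]
    have hbdd : BddAbove {k ∈ S | (k : ℝ) ≤ n * γ} :=
      ⟨⌊(n * γ : ℝ)⌋₊, fun k hk ↦ Nat.le_floor hk.2⟩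
    have hmax := Nat.sSup_mem hne hbdd
    refine poissonMeasure_le_expDecay hn hs (hell _ hmax.1) fun i hi ↦ ?_
    exact mul_nonneg_of_nonpos_of_nonpos (sub_nonpos.2 (mod_cast le_csSup hbdd hi))
      (sub_nonpos.2 hmax.2)
  calc scaledPoisson n γ F = poissonMeasure (n * γ) S := scaledPoisson_apply n γ hF.measurableSet
    _ ≤ poissonMeasure (n * γ) ({k ∈ S | (n * γ : ℝ) ≤ k} ∪ {k ∈ S | (k : ℝ) ≤ n * γ}) :=
        measure_mono fun k hk ↦ (le_total (n * γ : ℝ) k).imp (⟨hk, ·⟩) (⟨hk, ·⟩)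
    _ ≤ expDecay s n + expDecay s n := (measure_union_le _ _).trans (add_le_add hright hleft)

lemma eventually_scaledPoisson_le (hF : IsClosed F) (hst : s < t) : ∀ᶠ n in atTop, ∀ γ : ℝ≥0,
    (∀ y ∈ F, ENNReal.ofReal t ≤ ell γ y) → scaledPoisson n γ F ≤ expDecay s n := by
  obtain hs | hs := lt_or_ge s 0
  · exact .of_forall fun n γ _ ↦ prob_le_one.trans (one_le_expDecay hs.le n)
  obtain ⟨s', hss', hs't⟩ := exists_between hst
  filter_upwards [eventually_expDecay_add_self_le hss', eventually_ne_atTop 0] with n hsum hn γ hγ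
  exact (scaledPoisson_le_add_expDecay hn (hs.trans hss'.le) hs't hF hγ).trans hsum

lemma factorial_le_exp_one_mul_sqrt_mul_pow (hk : k ≠ 0) :
    (k ! : ℝ) ≤ exp 1 * √k * (k / exp 1) ^ k := by
  have hanti : Stirling.stirlingSeq k ≤ exp 1 / √2 := by
    have h := Stirling.stirlingSeq'_antitone (Nat.zero_le (k - 1))
    simpa [Nat.sub_add_cancel (Nat.one_le_iff_ne_zero.2 hk)] using h
  have hk' : (0 : ℝ) < k := by positivity
  rw [Stirling.stirlingSeq, div_le_iff₀ (by positivity)] at hanti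
  refine hanti.trans_eq ?_
  rw [sqrt_mul zero_le_two]
  field_simp

lemma exp_neg_le_mul_poissonMeasure_singleton (hr : 0 < r) (hk : k ≠ 0) :
    ENNReal.ofReal (exp (-(r - k + k * log (k / r)))) ≤
      ENNReal.ofReal (exp 1 * k) * poissonMeasure r {k} := by
  have hsqrt : √k ≤ k := sqrt_le_self_iff.2 (.inr (mod_cast Nat.one_le_iff_ne_zero.2 hk))
  rw [poissonMeasure_singleton, ← ENNReal.ofReal_mul (by positivity)]
  apply ENNReal.ofReal_le_ofReal
  rw [← mul_div_assoc, le_div_iff₀ (by positivity)]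
  have hexp : exp (-(r - k + k * log (k / r))) = exp (-r) * r ^ k / (k / exp 1) ^ k := by
    rw [show -((r : ℝ) - k + k * log (k / r)) = -r + k * (1 - log (k / r)) by ring, exp_add,
      exp_nat_mul, exp_sub, exp_log (by positivity), div_pow, div_pow, div_pow]
    field_simp
  rw [hexp, div_mul_eq_mul_div, div_le_iff₀ (by positivity)]
  calc exp (-r) * r ^ k * (k ! : ℝ)
      ≤ exp (-r) * r ^ k * (exp 1 * k * (k / exp 1) ^ k) := by
        gcongr
        exact (factorial_le_exp_one_mul_sqrt_mul_pow hk).trans (by gcongr)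
    _ = exp 1 * k * (exp (-r) * r ^ k) * (k / exp 1) ^ k := by ring

lemma eventually_expDecay_le_scaledPoisson_zero (hG : (0 : ℝ) ∈ G) (hGo : IsOpen G) (hc : γ < c) :
    ∀ᶠ p : ℕ × ℝ≥0 in atTop ×ˢ 𝓝 γ, expDecay c p.1 ≤ scaledPoisson p.1 p.2 G := by
  filter_upwards [tendsto_snd.eventually
    (NNReal.continuous_coe.continuousAt.eventually_lt_const hc)] with ⟨n, γ'⟩ hγ'
  calc expDecay c n
      ≤ poissonMeasure (n * γ') {0} := by
        rw [poissonMeasure_singleton, expDecay]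
        apply ENNReal.ofReal_le_ofReal
        simpa using mul_le_mul_of_nonneg_left hγ'.le n.cast_nonneg
    _ ≤ poissonMeasure (n * γ') {k : ℕ | (k : ℝ) / n ∈ G} := by
        gcongr
        simpa using hG
    _ = scaledPoisson n γ' G := (scaledPoisson_apply n γ' hGo.measurableSet).symm

lemma expDecay_le_mul_scaledPoisson (hn : n ≠ 0) (hγ : 0 < γ) (hk : k ≠ 0) (hG : IsOpen G)
    (hkG : (k : ℝ) / n ∈ G) :
    expDecay (γ - k / n + k / n * log (k / n / γ)) n ≤
      ENNReal.ofReal (exp 1 * k) * scaledPoisson n γ G := by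
  have hr : 0 < n * γ := by positivity
  rw [scaledPoisson_apply n γ hG.measurableSet]
  calc expDecay (γ - k / n + k / n * log (k / n / γ)) n
      = ENNReal.ofReal (exp (-((n * γ : ℝ≥0) - k + k * log (k / (n * γ : ℝ≥0))))) := by
        rw [expDecay, NNReal.coe_mul, NNReal.coe_natCast, div_div]
        field_simp
    _ ≤ ENNReal.ofReal (exp 1 * k) * poissonMeasure (n * γ) {k} :=
        exp_neg_le_mul_poissonMeasure_singleton hr hk
    _ ≤ ENNReal.ofReal (exp 1 * k) * poissonMeasure (n * γ) {k : ℕ | (k : ℝ) / n ∈ G} := by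
        gcongr
        simpa using hkG

lemma eventually_expDecay_le_scaledPoisson_of_pos (hG : IsOpen G) (haG : a ∈ G) (ha : 0 < a)
    (hγ : 0 < γ) (hc : γ - a + a * log (a / γ) < c) :
    ∀ᶠ p : ℕ × ℝ≥0 in atTop ×ˢ 𝓝 γ, expDecay c p.1 ≤ scaledPoisson p.1 p.2 G := by
  obtain ⟨c', hc', hc'c⟩ := exists_between hc
  have hγ' : (0 : ℝ) < γ := hγ
  have hratio : Tendsto (fun p : ℕ × ℝ≥0 ↦ (⌈a * p.1⌉₊ : ℝ) / p.1) (atTop ×ˢ 𝓝 γ) (𝓝 a) :=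
    ((tendsto_nat_ceil_mul_div_atTop ha.le).comp tendsto_natCast_atTop_atTop).comp tendsto_fst
  have hmean : Tendsto (fun p : ℕ × ℝ≥0 ↦ (p.2 : ℝ)) (atTop ×ˢ 𝓝 γ) (𝓝 γ) :=
    (NNReal.continuous_coe.tendsto γ).comp tendsto_snd
  have hrate := (hmean.sub hratio).add
    (hratio.mul ((hratio.div hmean hγ'.ne').log (div_pos ha hγ').ne'))
  filter_upwards [hrate.eventually_lt_const hc', hratio.eventually (hG.mem_nhds haG),
    hratio.eventually_lt_const (lt_add_one a), tendsto_snd.eventually (lt_mem_nhds hγ),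
    tendsto_fst.eventually (eventually_ne_atTop 0), tendsto_fst.eventually
      (eventually_ofReal_mul_natCast_mul_expDecay_le (exp 1 * (a + 1)) hc'c)]
    with ⟨n, γ'⟩ hlt hkG hka hγ'0 hn habsorb
  dsimp only at hlt hkG hka hγ'0 hn habsorb ⊢
  have hn' : (0 : ℝ) < n := by positivity
  have hk : ⌈a * n⌉₊ ≠ 0 := (Nat.ceil_pos.2 (mul_pos ha hn')).ne'
  have hscale : 0 < exp 1 * (a + 1) * n := by positivity
  rw [← ENNReal.mul_le_mul_iff_right (ENNReal.ofReal_pos.2 hscale).ne' ENNReal.ofReal_ne_top]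
  calc ENNReal.ofReal (exp 1 * (a + 1) * n) * expDecay c n
      ≤ expDecay c' n := habsorb
    _ ≤ expDecay (γ' - ⌈a * n⌉₊ / n + ⌈a * n⌉₊ / n * log (⌈a * n⌉₊ / n / γ')) n :=
        expDecay_antitone n hlt.le
    _ ≤ ENNReal.ofReal (exp 1 * ⌈a * n⌉₊) * scaledPoisson n γ' G :=
        expDecay_le_mul_scaledPoisson hn hγ'0 hk hG hkG
    _ ≤ ENNReal.ofReal (exp 1 * (a + 1) * n) * scaledPoisson n γ' G := by
        rw [mul_assoc]
        gcongr
        exact ((div_lt_iff₀ hn').1 hka).le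

lemma eventually_expDecay_le_scaledPoisson (hG : IsOpen G) (haG : a ∈ G)
    (hc : ell γ a < ENNReal.ofReal c) :
    ∀ᶠ p : ℕ × ℝ≥0 in atTop ×ˢ 𝓝 γ, expDecay c p.1 ≤ scaledPoisson p.1 p.2 G := by
  obtain rfl | ha := (nonneg_of_ell_ne_top hc.ne_top).eq_or_lt
  · rw [ell_zero_right] at hc
    exact eventually_expDecay_le_scaledPoisson_zero haG hG (ENNReal.ofReal_lt_ofReal_iff'.1 hc).1
  obtain rfl | hγ := eq_zero_or_pos γ
  · exact absurd (ell_zero_left ha) hc.ne_top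
  rw [ell_of_pos (NNReal.coe_pos.2 hγ) ha] at hc
  exact eventually_expDecay_le_scaledPoisson_of_pos hG haG ha hγ
    (ENNReal.ofReal_lt_ofReal_iff'.1 hc).1

theorem isUniformLDP_scaledPoisson :
    IsUniformLDP scaledPoisson (fun (γ : ℝ≥0) (a : ℝ) ↦ ell γ a) where
  lowerSemicontinuous := lowerSemicontinuous_uncurry_ell
  isClosedMap_fst _ ht := isClosedMap_fst_sublevel_ell ht
  isClosedMap_snd _ ht := isClosedMap_snd_sublevel_ell ht
  upper _ hF _ _ hst := eventually_scaledPoisson_le hF hst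
  lower _ hG _ _ haG _ hc := eventually_expDecay_le_scaledPoisson hG haG hc

end Poisson

section RandomMean

variable {ν : ℕ → Measure ℝ} {ψ : ℝ → ℝ≥0∞} {γ : ℝ}

lemma HasLDP.mem_attainable (h : HasLDP ν ψ) (hγ : ψ γ ≠ ⊤) : γ ∈ Attainable ν := fun _ hε ↦
  eventually_atTop.1 <|
    h.eventually_measure_pos isOpen_Ioo ⟨sub_lt_self γ hε, lt_add_of_pos_right γ hε⟩ hγ

lemma HasLDP.nonneg_of_ne_top (h : HasLDP ν ψ) (hsupp : ∀ n, ν n (Iio 0) = 0) (hγ : ψ γ ≠ ⊤) :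
    0 ≤ γ := by
  by_contra hneg
  obtain ⟨n, hn⟩ := (h.eventually_measure_pos isOpen_Iio (not_le.1 hneg) hγ).exists
  exact hn.ne' (hsupp n)

lemma iInf_attainable_eq (h : HasLDP ν ψ) (hsupp : ∀ n, ν n (Iio 0) = 0) (a : ℝ) :
    ⨅ γ ∈ Attainable ν, ell γ a + ψ γ = ⨅ γ : ℝ≥0, ell γ a + ψ γ := by
  refine le_antisymm (le_iInf fun γ ↦ ?_) (le_iInf₂ fun γ _ ↦ ?_)
  · obtain hγ | hγ := eq_or_ne (ψ γ) ⊤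
    · simp [hγ]
    · exact iInf₂_le (γ : ℝ) (h.mem_attainable hγ)
  · obtain hγ | hγ := eq_or_ne (ψ γ) ⊤
    · simp [hγ]
    · exact iInf_le (fun γ : ℝ≥0 ↦ ell γ a + ψ γ) ⟨γ, h.nonneg_of_ne_top hsupp hγ⟩

lemma setLIntegral_Ici_zero_eq (ν : Measure ℝ) (f : ℝ → ℝ≥0∞) :
    ∫⁻ x in Ici 0, f x ∂ν = ∫⁻ x : ℝ≥0, f x ∂ν.comap (↑) := by
  rw [← NNReal.isClosedEmbedding_coe.measurableEmbedding.lintegral_map,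
    NNReal.isClosedEmbedding_coe.measurableEmbedding.map_comap, NNReal.range_coe]

theorem stmt3_general (ν : ℕ → Measure ℝ) [∀ n, IsProbabilityMeasure (ν n)]
    (hsupp : ∀ n, ν n (Set.Iio 0) = 0)
    (ψ : ℝ → ℝ≥0∞) (hLDP : HasLDP ν ψ)
    (μ : ℕ → Measure ℝ)
    (hμ : ∀ n : ℕ, 1 ≤ n → ∀ B : Set ℝ, MeasurableSet B →
      μ n B = ∫⁻ γ in Set.Ici (0 : ℝ),
        ProbabilityTheory.poissonMeasure (Real.toNNReal ((n : ℝ) * γ))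
          {k : ℕ | (k : ℝ) / (n : ℝ) ∈ B} ∂(ν n))
    (I : ℝ → ℝ≥0∞) (hI : ∀ a : ℝ, I a = ⨅ γ ∈ Attainable ν, (ell γ a + ψ γ)) :
    HasLDP μ I := by
  have hemb := NNReal.isClosedEmbedding_coe
  have hnull (n : ℕ) : ν n (range ((↑) : ℝ≥0 → ℝ))ᶜ = 0 := by
    rw [NNReal.range_coe, compl_Ici, hsupp]
  have (n : ℕ) : IsProbabilityMeasure ((ν n).comap ((↑) : ℝ≥0 → ℝ)) :=
    hemb.measurableEmbedding.isProbabilityMeasure_comap (ae_iff.2 (hnull n))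
  have hmix (n : ℕ) (hn : 1 ≤ n) (B : Set ℝ) (hB : MeasurableSet B) :
      μ n B = ∫⁻ γ : ℝ≥0, scaledPoisson n γ B ∂(ν n).comap (↑) := by
    simp only [hμ n hn B hB, setLIntegral_Ici_zero_eq, scaledPoisson_apply n _ hB,
      Real.toNNReal_mul n.cast_nonneg, Real.toNNReal_natCast, Real.toNNReal_coe]
  rw [show I = fun a ↦ ⨅ γ : ℝ≥0, ell γ a + ψ γ from
    funext fun a ↦ (hI a).trans (iInf_attainable_eq hLDP hsupp a)]
  exact isUniformLDP_scaledPoisson.hasLDP_mixture (hLDP.comap_isClosedEmbedding hemb hnull)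
    ((eventually_ge_atTop 1).mono hmix)

end RandomMean

theorem stmt3 (ν : ℕ → Measure ℝ) [∀ n, IsProbabilityMeasure (ν n)]
    (hsupp : ∀ n, ν n (Set.Iio 0) = 0)
    (ψ : ℝ → ℝ≥0∞) (hLDP : HasLDP ν ψ)
    (μ : ℕ → Measure ℝ) [∀ n, IsProbabilityMeasure (μ n)]
    (hμ : ∀ n : ℕ, 1 ≤ n → ∀ B : Set ℝ, MeasurableSet B →
      μ n B = ∫⁻ γ in Set.Ici (0 : ℝ),
        ProbabilityTheory.poissonMeasure (Real.toNNReal ((n : ℝ) * γ))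
          {k : ℕ | (k : ℝ) / (n : ℝ) ∈ B} ∂(ν n))
    (I : ℝ → ℝ≥0∞) (hI : ∀ a : ℝ, I a = ⨅ γ ∈ Attainable ν, (ell γ a + ψ γ)) :
    (∀ F : Set ℝ, IsClosed F →
      Filter.limsup (fun n : ℕ => ((n : ℝ)⁻¹ : EReal) * ENNReal.log (μ n F)) Filter.atTop
        ≤ -(⨅ a ∈ F, (I a : EReal))) ∧
    (∀ G : Set ℝ, IsOpen G →
      -(⨅ a ∈ G, (I a : EReal)) ≤
        Filter.liminf (fun n : ℕ => ((n : ℝ)⁻¹ : EReal) * ENNReal.log (μ n G)) Filter.atTop) :=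
  (stmt3_general ν hsupp ψ hLDP μ hμ I hI).2
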